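/- Fix a natural number n ≥ 2, real numbers ℓ > 0 and a with 4ℓ²a + n² > 0, and natural numbers k, K. Set s := √(4ℓ²a + n²), ω := (n + s + 2k + 4K)/(2ℓ), and for x ∈ ℝ and j ∈ ℕ let (x)_j := ∏_{i=0}^{j−1}(x+i) denote the rising factorial. Define ψ : (0,∞) → ℝ by ψ(r) := (ℓ² + r²)^{−ℓω/2} · r^k · ∑_{j=0}^{K} [((−K)_j · (−K − s/2)_j) / ((n/2 + k)_j · j!)] · (−r²/ℓ²)^j. Then there exists a real number L ≠ 0 such that r^{(n+s)/2} · ψ(r) → L as r → ∞. In particular ψ(r) = O(r^{−(n+s)/2}) as r → ∞. -/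

import Mathlib

open Filter Asymptotics

/-! The rising factorial `(-K)_j` vanishes for `j > K`, so the hypergeometric factor of `ψ` is a
polynomial of degree `K` in `-r² / ℓ²`. It therefore grows like its leading term, a multiple of
`r ^ (2 * K)`, while `(ℓ² + r²) ^ (-ℓω / 2)` is equivalent to `r ^ (-ℓω)`. As
`ℓω = (n + s) / 2 + k + 2 * K`, every power of `r` other than `r ^ (-(n + s) / 2)` cancels, and by
the reflection `(-K - x)_K = (-1) ^ K * (x + 1)_K` the remaining constant is
`(s / 2 + 1)_K / (n / 2 + k)_K * (-1 / ℓ²) ^ K`.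
-/

section Asymptotics

lemma isEquivalent_const_add_pow_rpow (c q : ℝ) {m : ℕ} (hm : m ≠ 0) :
    (fun r : ℝ => (c + r ^ m) ^ q) ~[atTop] fun r => r ^ (m * q) := by
  -- `IsEquivalent.rpow` asks for a comparison function that is nonnegative on the whole line.
  have habs : (fun r : ℝ => r ^ m) =ᶠ[atTop] fun r => |r| ^ m := by
    filter_upwards [eventually_ge_atTop 0] with r hr
    rw [abs_of_nonneg hr]
  have hbase : (fun r : ℝ => c + r ^ m) ~[atTop] fun r => |r| ^ m :=
    (IsEquivalent.refl.const_add_of_norm_tendsto_atTop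
      (tendsto_norm_atTop_atTop.comp (tendsto_pow_atTop hm))).trans_eventuallyEq habs
  refine (hbase.rpow fun r => pow_nonneg (abs_nonneg r) m).trans_eventuallyEq ?_
  filter_upwards [eventually_ge_atTop 0] with r hr
  rw [Pi.pow_apply, abs_of_nonneg hr, Real.rpow_mul hr, Real.rpow_natCast]

lemma isEquivalent_eval_const_mul_pow (P : Polynomial ℝ) {t : ℝ} (ht : t ≠ 0) {m : ℕ}
    (hm : m ≠ 0) :
    (fun r : ℝ => P.eval (t * r ^ m)) ~[atTop]
      fun r => P.leadingCoeff * t ^ P.natDegree * r ^ (m * P.natDegree) := by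
  have hdeg : (Polynomial.C t * Polynomial.X ^ m).natDegree = m :=
    Polynomial.natDegree_C_mul_X_pow m t ht
  have hlead := (P.comp (Polynomial.C t * Polynomial.X ^ m)).isEquivalent_atTop_lead
  rw [Polynomial.leadingCoeff_comp (hdeg.symm ▸ hm), Polynomial.natDegree_comp, hdeg,
    Polynomial.leadingCoeff_C_mul_X_pow, mul_comm P.natDegree] at hlead
  simpa using hlead

lemma tendsto_rpow_mul_of_isEquivalent {f : ℝ → ℝ} {L α : ℝ}
    (hf : f ~[atTop] fun r => L * r ^ (-α)) :
    Tendsto (fun r => r ^ α * f r) atTop (nhds L) := by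
  have hmul := (IsEquivalent.refl (u := fun r : ℝ => r ^ α)).mul hf
  refine hmul.tendsto_nhds_iff.2 (tendsto_const_nhds.congr' ?_)
  filter_upwards [eventually_gt_atTop 0] with r hr
  rw [Pi.mul_apply, mul_left_comm, ← Real.rpow_add hr, add_neg_cancel, Real.rpow_zero, mul_one]

end Asymptotics

section Pochhammer

lemma ascPochhammer_eval_eq_prod_range {R : Type*} [CommSemiring R] (x : R) (j : ℕ) :
    (ascPochhammer R j).eval x = ∏ i ∈ Finset.range j, (x + i) := by
  induction j with
  | zero => simp
  | succ j ih => rw [ascPochhammer_succ_eval, ih, Finset.prod_range_succ]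

variable {R : Type*} [Ring R]

lemma ascPochhammer_eval_neg_natCast_sub (K : ℕ) (x : R) :
    (ascPochhammer R K).eval (-(K : R) - x) = (-1) ^ K * (ascPochhammer R K).eval (x + 1) := by
  rw [← neg_add', ascPochhammer_eval_neg_eq_descPochhammer, descPochhammer_eval_eq_ascPochhammer,
    add_sub_cancel_left]

lemma ascPochhammer_eval_neg_natCast_self (K : ℕ) :
    (ascPochhammer R K).eval (-(K : R)) = (-1) ^ K * (K.factorial : R) := by
  simpa using ascPochhammer_eval_neg_natCast_sub K (0 : R)

end Pochhammer

section Hypergeometric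

variable {𝕂 : Type*} [Field 𝕂]

/-- The terminating Gauss hypergeometric series `₂F₁(-K, b; c; X)` as a polynomial, which gives
access to its degree and leading coefficient. -/
noncomputable def hypergeometricPolynomial (K : ℕ) (b c : 𝕂) : Polynomial 𝕂 :=
  ∑ j ∈ Finset.range (K + 1),
    Polynomial.monomial j (ordinaryHypergeometricCoefficient (-(K : 𝕂)) b c j)

namespace hypergeometricPolynomial

lemma eval_eq_sum (K : ℕ) (b c x : 𝕂) :
    (hypergeometricPolynomial K b c).eval x =
      ∑ j ∈ Finset.range (K + 1), ordinaryHypergeometricCoefficient (-(K : 𝕂)) b c j * x ^ j := by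
  simp only [hypergeometricPolynomial, Polynomial.eval_finsetSum, Polynomial.eval_monomial]

lemma eval_eq_ordinaryHypergeometric [TopologicalSpace 𝕂] [IsTopologicalRing 𝕂]
    (K : ℕ) (b c x : 𝕂) :
    (hypergeometricPolynomial K b c).eval x = ₂F₁ (-(K : 𝕂)) b c x := by
  rw [eval_eq_sum, ordinaryHypergeometric_eq_tsum]
  refine (tsum_eq_sum fun j hj => ?_).symm
  have hKj : K < j := by simpa using hj
  rw [ordinaryHypergeometricCoefficient, ascPochhammer_eval_neg_coe_nat_of_lt hKj, mul_zero,
    zero_mul, zero_mul, zero_mul]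

variable [CharZero 𝕂]

lemma coeff_self (K : ℕ) (b c : 𝕂) :
    (hypergeometricPolynomial K b c).coeff K =
      (-1) ^ K * (ascPochhammer 𝕂 K).eval b / (ascPochhammer 𝕂 K).eval c := by
  have hfact : (K.factorial : 𝕂) ≠ 0 := Nat.cast_ne_zero.2 K.factorial_ne_zero
  simp only [hypergeometricPolynomial, Polynomial.finsetSum_coeff, Polynomial.coeff_monomial,
    Finset.sum_ite_eq', Finset.self_mem_range_succ, if_true, ordinaryHypergeometricCoefficient,
    ascPochhammer_eval_neg_natCast_self]
  field_simp

variable {K : ℕ} {b c : 𝕂}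

lemma natDegree_eq (hb : (ascPochhammer 𝕂 K).eval b ≠ 0)
    (hc : (ascPochhammer 𝕂 K).eval c ≠ 0) : (hypergeometricPolynomial K b c).natDegree = K := by
  refine Polynomial.natDegree_eq_of_le_of_coeff_ne_zero
    (Polynomial.natDegree_sum_le_of_forall_le _ _ fun j hj => ?_) ?_
  · exact (Polynomial.natDegree_monomial_le _).trans (Finset.mem_range_succ_iff.1 hj)
  · rw [coeff_self]
    exact div_ne_zero (mul_ne_zero (pow_ne_zero _ (neg_ne_zero.2 one_ne_zero)) hb) hc

lemma leadingCoeff_eq (hb : (ascPochhammer 𝕂 K).eval b ≠ 0)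
    (hc : (ascPochhammer 𝕂 K).eval c ≠ 0) :
    (hypergeometricPolynomial K b c).leadingCoeff =
      (-1) ^ K * (ascPochhammer 𝕂 K).eval b / (ascPochhammer 𝕂 K).eval c := by
  rw [Polynomial.leadingCoeff, natDegree_eq hb hc, coeff_self]

end hypergeometricPolynomial

lemma isEquivalent_ordinaryHypergeometric_neg_natCast {K : ℕ} {x c t : ℝ}
    (hx : (ascPochhammer ℝ K).eval (x + 1) ≠ 0) (hc : (ascPochhammer ℝ K).eval c ≠ 0)
    (ht : t ≠ 0) {m : ℕ} (hm : m ≠ 0) :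
    (fun r : ℝ => ₂F₁ (-(K : ℝ)) (-(K : ℝ) - x) c (t * r ^ m)) ~[atTop] fun r =>
      (ascPochhammer ℝ K).eval (x + 1) / (ascPochhammer ℝ K).eval c * t ^ K * r ^ (m * K) := by
  have hsq : (-1 : ℝ) ^ K * (-1) ^ K = 1 := by rw [← mul_pow, neg_one_mul, neg_neg, one_pow]
  have hb : (ascPochhammer ℝ K).eval (-(K : ℝ) - x) ≠ 0 := by
    rw [ascPochhammer_eval_neg_natCast_sub]
    exact mul_ne_zero (pow_ne_zero _ (neg_ne_zero.2 one_ne_zero)) hx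
  have hP := isEquivalent_eval_const_mul_pow (hypergeometricPolynomial K (-(K : ℝ) - x) c) ht hm
  simpa only [hypergeometricPolynomial.eval_eq_ordinaryHypergeometric,
    hypergeometricPolynomial.leadingCoeff_eq hb hc, hypergeometricPolynomial.natDegree_eq hb hc,
    ascPochhammer_eval_neg_natCast_sub, ← mul_assoc, hsq, one_mul] using hP

end Hypergeometric

section RadialEigenfunction

variable (n s ℓ : ℝ) (k K : ℕ)

/-- The frequency `ω` of the mode with angular number `k` and radial number `K` on the anti-de
Sitter background of radius `ℓ`. The dimension `n` is allowed to be any real number. -/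
noncomputable def modeFrequency : ℝ := (n + s + 2 * k + 4 * K) / (2 * ℓ)

/-- The polynomial radial eigenfunction of frequency `modeFrequency n s ℓ k K`, with the
terminating sum written as Gauss's `₂F₁`. -/
noncomputable def radialEigenfunction (r : ℝ) : ℝ :=
  (ℓ ^ 2 + r ^ 2) ^ (-(ℓ * modeFrequency n s ℓ k K) / 2) * r ^ k *
    ₂F₁ (-(K : ℝ)) (-(K : ℝ) - s / 2) (n / 2 + k) (-(r ^ 2) / ℓ ^ 2)

lemma radialEigenfunction_eq_sum (r : ℝ) :
    radialEigenfunction n s ℓ k K r =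
      (ℓ ^ 2 + r ^ 2) ^ (-(ℓ * modeFrequency n s ℓ k K) / 2) * r ^ k *
        ∑ j ∈ Finset.range (K + 1),
          ((∏ i ∈ Finset.range j, (-(K : ℝ) + i)) *
              ∏ i ∈ Finset.range j, (-(K : ℝ) - s / 2 + i)) /
            ((∏ i ∈ Finset.range j, (n / 2 + k + i)) * (j.factorial : ℝ)) *
          (-(r ^ 2) / ℓ ^ 2) ^ j := by
  rw [radialEigenfunction, ← hypergeometricPolynomial.eval_eq_ordinaryHypergeometric,
    hypergeometricPolynomial.eval_eq_sum]
  congr 1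
  refine Finset.sum_congr rfl fun j _ => ?_
  simp only [ordinaryHypergeometricCoefficient, ascPochhammer_eval_eq_prod_range]
  ring

variable {n s ℓ k K}

lemma mul_modeFrequency (hℓ : ℓ ≠ 0) :
    ℓ * modeFrequency n s ℓ k K = (n + s) / 2 + k + 2 * K := by
  rw [modeFrequency]
  field_simp
  ring

theorem isEquivalent_radialEigenfunction (hℓ : ℓ ≠ 0)
    (hs : (ascPochhammer ℝ K).eval (s / 2 + 1) ≠ 0)
    (hn : (ascPochhammer ℝ K).eval (n / 2 + k) ≠ 0) :
    radialEigenfunction n s ℓ k K ~[atTop] fun r =>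
      (ascPochhammer ℝ K).eval (s / 2 + 1) / (ascPochhammer ℝ K).eval (n / 2 + k) *
        (-1 / ℓ ^ 2) ^ K * r ^ (-((n + s) / 2)) := by
  have ht : -1 / ℓ ^ 2 ≠ 0 := div_ne_zero (neg_ne_zero.2 one_ne_zero) (pow_ne_zero 2 hℓ)
  have harg (r : ℝ) : -(r ^ 2) / ℓ ^ 2 = -1 / ℓ ^ 2 * r ^ 2 := by ring
  have hfactor := isEquivalent_const_add_pow_rpow (ℓ ^ 2)
    (-(ℓ * modeFrequency n s ℓ k K) / 2) two_ne_zero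
  have hseries := isEquivalent_ordinaryHypergeometric_neg_natCast hs hn ht two_ne_zero
  simp only [← harg] at hseries
  refine ((hfactor.mul (IsEquivalent.refl (u := fun r : ℝ => r ^ k))).mul
    hseries).trans_eventuallyEq ?_
  filter_upwards [eventually_gt_atTop 0] with r hr
  have hpow : r ^ (((2 : ℕ) : ℝ) * (-(ℓ * modeFrequency n s ℓ k K) / 2)) * r ^ k * r ^ (2 * K) =
      r ^ (-((n + s) / 2)) := by
    rw [← Real.rpow_natCast, ← Real.rpow_natCast, ← Real.rpow_add hr, ← Real.rpow_add hr,
      mul_modeFrequency hℓ]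
    congr 1
    push_cast
    ring
  rw [← hpow]
  simp only [Pi.mul_apply]
  ring

theorem stmt10_general (hℓ : ℓ ≠ 0) (hs : (ascPochhammer ℝ K).eval (s / 2 + 1) ≠ 0)
    (hn : (ascPochhammer ℝ K).eval (n / 2 + k) ≠ 0) :
    (∃ L : ℝ, L ≠ 0 ∧
      Tendsto (fun r => r ^ ((n + s) / 2) * radialEigenfunction n s ℓ k K r) atTop (nhds L)) ∧
    radialEigenfunction n s ℓ k K =O[atTop] fun r => r ^ (-(n + s) / 2) := by
  have hequiv := isEquivalent_radialEigenfunction hℓ hs hn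
  refine ⟨⟨_, ?_, tendsto_rpow_mul_of_isEquivalent hequiv⟩, ?_⟩
  · exact mul_ne_zero (div_ne_zero hs hn)
      (pow_ne_zero K (div_ne_zero (neg_ne_zero.2 one_ne_zero) (pow_ne_zero 2 hℓ)))
  · simpa only [neg_div] using hequiv.trans_isBigO (isBigO_const_mul_self _ _ _)

end RadialEigenfunction

/-- The explicit polynomial (terminating hypergeometric) radial eigenfunction on the
anti-de Sitter background decays as `r^{-(n+s)/2}` at infinity: `r^{(n+s)/2} ψ(r)` tends
to a nonzero limit, and in particular `ψ(r) = O(r^{-(n+s)/2})` as `r → ∞`. -/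
theorem stmt10 (n : ℕ) (hn : 2 ≤ n) (ℓ a s ω : ℝ) (hℓ : 0 < ℓ)
    (hpos : 0 < 4 * ℓ ^ 2 * a + (n : ℝ) ^ 2)
    (k K : ℕ)
    (hs : s = Real.sqrt (4 * ℓ ^ 2 * a + (n : ℝ) ^ 2))
    (hω : ω = ((n : ℝ) + s + 2 * k + 4 * K) / (2 * ℓ))
    (rf : ℝ → ℕ → ℝ)
    (hrf : ∀ (x : ℝ) (j : ℕ), rf x j = ∏ i ∈ Finset.range j, (x + i))
    (ψ : ℝ → ℝ)
    (hψ : ∀ r : ℝ, ψ r =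
      (ℓ ^ 2 + r ^ 2) ^ (-(ℓ * ω) / 2) * r ^ k *
        ∑ j ∈ Finset.range (K + 1),
          (rf (-(K : ℝ)) j * rf (-(K : ℝ) - s / 2) j) /
              (rf ((n : ℝ) / 2 + (k : ℝ)) j * (Nat.factorial j : ℝ)) *
            (-(r ^ 2) / ℓ ^ 2) ^ j) :
    (∃ L : ℝ, L ≠ 0 ∧
      Tendsto (fun r : ℝ => r ^ (((n : ℝ) + s) / 2) * ψ r) atTop (nhds L)) ∧
    ψ =O[atTop] fun r : ℝ => r ^ (-((n : ℝ) + s) / 2) := by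
  have hs_nonneg : 0 ≤ s := hs ▸ Real.sqrt_nonneg _
  have hs_pos : 0 < s / 2 + 1 := by positivity
  have hn_pos : (0 : ℝ) < n / 2 + k := by positivity
  obtain rfl : ψ = radialEigenfunction n s ℓ k K := by
    ext r
    simp only [hψ, hrf, hω, radialEigenfunction_eq_sum, modeFrequency]
  exact stmt10_general hℓ.ne' (ascPochhammer_pos K _ hs_pos).ne' (ascPochhammer_pos K _ hn_pos).ne'
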